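/- Let R be a conditional rewrite system that is semi-closed, left-linear and right-applicative. If the conditional rewrite relation →_R is confluent, then the combined relation →_{β∪R} = →β ∪ →_R is confluent. -/

import Mathlib

/-!
The proof combines two confluent relations by the Hindley–Rosen lemma (`hindley_rosen`):
`→β` is confluent by the diamond property of parallel reduction (`ParB.diamond`), `→_R` is
confluent by hypothesis, and it remains to see that the two commute (`commutes_beta_condRew`).

Commutation is proved stratum by stratum (`parB_condRel_tile`): if `u` is a parallel β-reduct
of `t` and `t →_{R_i} v`, then `u →*_{R_i} w` for some parallel β-reduct `w` of `v`. The
critical case is a root step `lσ → rσ`.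

* Since `l` is algebraic and linear, a parallel β-step from `lσ` leads to `lσ'` with `σ` reducing
  in parallel to `σ'` (`Pat.parB_subst`). The reduct `rσ` then reduces in parallel to `rσ'`.
* The rule still applies with `σ'` (`joinable_of_parB`). A condition `d = c` holds for `σ`
  through a common reduct `w` of `dσ` and `cσ = c`. As `c` is closed and applicative and
  right-hand sides are applicative, `w` is applicative, hence has no β-redex. Commutation at the
  preceding stratum applied to `dσ` therefore shows `dσ' →* w`.

The relations `Beta` and `CondStep` have closure under substitution among their constructors, which
prevents inversion; they are first replaced by `ParB` and `CStep`, for which this closure is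
a lemma.
-/

set_option autoImplicit false

/-- λ-terms over a signature `Sig`, in de Bruijn representation
(terms are identified up to α-conversion). -/
inductive Tm (Sig : Type) : Type
  | var : ℕ → Tm Sig
  | app : Tm Sig → Tm Sig → Tm Sig
  | lam : Tm Sig → Tm Sig
  | sym : Sig → Tm Sig

namespace Tm

variable {Sig : Type}

/-- Shift the free de Bruijn indices `≥ d` up by one. -/
def lift (d : ℕ) : Tm Sig → Tm Sig
  | var n => if n < d then var n else var (n + 1)
  | app t u => app (lift d t) (lift d u)
  | lam t => lam (lift (d + 1) t)
  | sym f => sym f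

/-- Lift a parallel substitution under one binder. -/
def up (σ : ℕ → Tm Sig) : ℕ → Tm Sig
  | 0 => var 0
  | n + 1 => lift 0 (σ n)

/-- Capture-avoiding (parallel) substitution. -/
def subst (σ : ℕ → Tm Sig) : Tm Sig → Tm Sig
  | var n => σ n
  | app t u => app (subst σ t) (subst σ u)
  | lam t => lam (subst (up σ) t)
  | sym f => sym f

def scons (u : Tm Sig) (σ : ℕ → Tm Sig) : ℕ → Tm Sig
  | 0 => u
  | n + 1 => σ n

/-- `subst1 u t` substitutes `u` for the de Bruijn variable `0` in `t`. -/
def subst1 (u t : Tm Sig) : Tm Sig := subst (scons u var) t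

/-- `FVar t n` : de Bruijn index `n` occurs free in `t`. -/
def FVar : Tm Sig → ℕ → Prop
  | var m, n => m = n
  | app t u, n => FVar t n ∨ FVar u n
  | lam t, n => FVar t (n + 1)
  | sym _, _ => False

/-- Closed terms. -/
def ClosedTm (t : Tm Sig) : Prop := ∀ n, ¬ FVar t n

def countVar : Tm Sig → ℕ → ℕ
  | var m, n => if m = n then 1 else 0
  | app t u, n => countVar t n + countVar u n
  | lam t, n => countVar t (n + 1)
  | sym _, _ => 0

/-- Linear terms: each variable occurs at most once. -/
def LinearTm (t : Tm Sig) : Prop := ∀ n, countVar t n ≤ 1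

/-- `appList h [t1, …, tn] = h t1 … tn`. -/
def appList (h : Tm Sig) : List (Tm Sig) → Tm Sig
  | [] => h
  | u :: us => appList (app h u) us

/-- Applicative terms: terms containing no abstraction. -/
inductive Applicative : Tm Sig → Prop
  | var (n : ℕ) : Applicative (var n)
  | sym (f : Sig) : Applicative (sym f)
  | app {t u : Tm Sig} : Applicative t → Applicative u → Applicative (app t u)

/-- Algebraic terms: `t ::= x | f t1 … tn`. -/
inductive Algebraic : Tm Sig → Prop
  | var (n : ℕ) : Algebraic (var n)
  | symApp (f : Sig) (ts : List (Tm Sig)) :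
      (∀ t ∈ ts, Algebraic t) → Algebraic (appList (sym f) ts)

/-- `Subterm s t` : `s` is a subterm of `t`. -/
inductive Subterm : Tm Sig → Tm Sig → Prop
  | refl (t : Tm Sig) : Subterm t t
  | appL {s t u : Tm Sig} : Subterm s t → Subterm s (app t u)
  | appR {s t u : Tm Sig} : Subterm s u → Subterm s (app t u)
  | lam {s t : Tm Sig} : Subterm s t → Subterm s (lam t)

/-- `lamN m t = λ…λ.t` with `m` abstractions. -/
def lamN : ℕ → Tm Sig → Tm Sig
  | 0, t => t
  | m + 1, t => lam (lamN m t)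

end Tm

/-- β-reduction: the smallest rewrite relation (closed under abstraction, left and
right application and substitution) with `(λ.t) u →β t[0 := u]`. -/
inductive Beta {Sig : Type} : Tm Sig → Tm Sig → Prop
  | beta (t u : Tm Sig) : Beta (Tm.app (Tm.lam t) u) (Tm.subst1 u t)
  | abs {t u : Tm Sig} : Beta t u → Beta (Tm.lam t) (Tm.lam u)
  | appL {t u v : Tm Sig} : Beta t u → Beta (Tm.app t v) (Tm.app u v)
  | appR {t u v : Tm Sig} : Beta t u → Beta (Tm.app v t) (Tm.app v u)
  | substC (σ : ℕ → Tm Sig) {t u : Tm Sig} : Beta t u → Beta (Tm.subst σ t) (Tm.subst σ u)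

/-- Tait–Martin-Löf parallel β-reduction: the smallest parallel rewrite relation
with `(λ.t₁) t₂ ▷β u₁[0 := u₂]` whenever `t₁ ▷β u₁` and `t₂ ▷β u₂`. -/
inductive PBeta {Sig : Type} : Tm Sig → Tm Sig → Prop
  | var (n : ℕ) : PBeta (Tm.var n) (Tm.var n)
  | sym (f : Sig) : PBeta (Tm.sym f) (Tm.sym f)
  | app {t₁ u₁ t₂ u₂ : Tm Sig} : PBeta t₁ u₁ → PBeta t₂ u₂ →
      PBeta (Tm.app t₁ t₂) (Tm.app u₁ u₂)
  | abs {t u : Tm Sig} : PBeta t u → PBeta (Tm.lam t) (Tm.lam u)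
  | substC (σ : ℕ → Tm Sig) {t u : Tm Sig} : PBeta t u → PBeta (Tm.subst σ t) (Tm.subst σ u)
  | beta {t₁ u₁ t₂ u₂ : Tm Sig} : PBeta t₁ u₁ → PBeta t₂ u₂ →
      PBeta (Tm.app (Tm.lam t₁) t₂) (Tm.subst1 u₂ u₁)

/-- β-normal forms. -/
def BetaNormal {Sig : Type} (t : Tm Sig) : Prop := ∀ u, ¬ Beta t u

/-- `IsBnf t n` : `n` is a β-normal form of `t`. -/
def IsBnf {Sig : Type} (t n : Tm Sig) : Prop :=
  Relation.ReflTransGen Beta t n ∧ BetaNormal n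

/-- Weakly β-normalizing terms. -/
def WNbeta {Sig : Type} (t : Tm Sig) : Prop := ∃ n, IsBnf t n

/-- Conditional rewrite rule `d1 = c1 ∧ … ∧ dn = cn ⊃ l ↦ r`:  every variable of
the `di`, `ci` and `r` occurs in `l`, and `l` is a non-variable algebraic term. -/
structure CondRule (Sig : Type) where
  conds : List (Tm Sig × Tm Sig)
  lhs : Tm Sig
  rhs : Tm Sig
  lhs_alg : Tm.Algebraic lhs
  lhs_not_var : ∀ n, lhs ≠ Tm.var n
  fv_conds : ∀ p ∈ conds,
    (∀ n, Tm.FVar p.1 n → Tm.FVar lhs n) ∧ (∀ n, Tm.FVar p.2 n → Tm.FVar lhs n)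
  fv_rhs : ∀ n, Tm.FVar rhs n → Tm.FVar lhs n

/-- Joinability: a common reduct. -/
def Joinable {α : Type} (R : α → α → Prop) (t u : α) : Prop :=
  ∃ v, Relation.ReflTransGen R t v ∧ Relation.ReflTransGen R u v

/-- One stratum of conditional rewriting: the smallest rewrite relation such that
`lσ → rσ` for every rule whose conditions are joinable w.r.t. `prev`. -/
inductive CondStep {Sig : Type} (Rules : Set (CondRule Sig))
    (prev : Tm Sig → Tm Sig → Prop) : Tm Sig → Tm Sig → Prop
  | rule {ρ : CondRule Sig} (hρ : ρ ∈ Rules) (σ : ℕ → Tm Sig)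
      (hconds : ∀ p ∈ ρ.conds, Joinable prev (Tm.subst σ p.1) (Tm.subst σ p.2)) :
      CondStep Rules prev (Tm.subst σ ρ.lhs) (Tm.subst σ ρ.rhs)
  | abs {t u : Tm Sig} : CondStep Rules prev t u →
      CondStep Rules prev (Tm.lam t) (Tm.lam u)
  | appL {t u v : Tm Sig} : CondStep Rules prev t u →
      CondStep Rules prev (Tm.app t v) (Tm.app u v)
  | appR {t u v : Tm Sig} : CondStep Rules prev t u →
      CondStep Rules prev (Tm.app v t) (Tm.app v u)
  | substC (σ : ℕ → Tm Sig) {t u : Tm Sig} : CondStep Rules prev t u →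
      CondStep Rules prev (Tm.subst σ t) (Tm.subst σ u)

/-- Stratified conditional rewriting `→_{R_i}`. -/
def CondRel {Sig : Type} (Rules : Set (CondRule Sig)) : ℕ → Tm Sig → Tm Sig → Prop
  | 0 => fun _ _ => False
  | i + 1 => CondStep Rules (CondRel Rules i)

/-- Conditional rewriting `→_R = ⋃ i, →_{R_i}`. -/
def CondRew {Sig : Type} (Rules : Set (CondRule Sig)) (t u : Tm Sig) : Prop :=
  ∃ i, CondRel Rules i t u

/-- Stratified β-conditional rewriting `→_{R(β)_i}`: conditions are evaluated
w.r.t. `→_{β ∪ R(β)_{i-1}}`. -/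
def BCondRel {Sig : Type} (Rules : Set (CondRule Sig)) : ℕ → Tm Sig → Tm Sig → Prop
  | 0 => fun _ _ => False
  | i + 1 => CondStep Rules (fun a b => Beta a b ∨ BCondRel Rules i a b)

/-- β-conditional rewriting `→_{R(β)} = ⋃ i, →_{R(β)_i}`. -/
def BCondRew {Sig : Type} (Rules : Set (CondRule Sig)) (t u : Tm Sig) : Prop :=
  ∃ i, BCondRel Rules i t u

def IsConfluent {α : Type} (R : α → α → Prop) : Prop :=
  ∀ t u v, Relation.ReflTransGen R t u → Relation.ReflTransGen R t v →
    ∃ w, Relation.ReflTransGen R u w ∧ Relation.ReflTransGen R v w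

def ConfluentOn {α : Type} (S : Set α) (R : α → α → Prop) : Prop :=
  ∀ t ∈ S, ∀ u v, Relation.ReflTransGen R t u → Relation.ReflTransGen R t v →
    ∃ w, Relation.ReflTransGen R u w ∧ Relation.ReflTransGen R v w

def Commutes {α : Type} (R₁ R₂ : α → α → Prop) : Prop :=
  ∀ s u t, Relation.ReflTransGen R₁ s u → Relation.ReflTransGen R₂ s t →
    ∃ v, Relation.ReflTransGen R₂ u v ∧ Relation.ReflTransGen R₁ t v

def LeftLinear {Sig : Type} (Rules : Set (CondRule Sig)) : Prop :=
  ∀ ρ ∈ Rules, Tm.LinearTm ρ.lhs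

/-- Semi-closed systems: in every rule the `ci` are closed applicative terms. -/
def SemiClosed {Sig : Type} (Rules : Set (CondRule Sig)) : Prop :=
  ∀ ρ ∈ Rules, ∀ p ∈ ρ.conds, Tm.Applicative p.2 ∧ Tm.ClosedTm p.2

def RightApplicative {Sig : Type} (Rules : Set (CondRule Sig)) : Prop :=
  ∀ ρ ∈ Rules, Tm.Applicative ρ.rhs

def RightAlgebraic {Sig : Type} (Rules : Set (CondRule Sig)) : Prop :=
  ∀ ρ ∈ Rules, Tm.Algebraic ρ.rhs

/-- Algebraic systems: in every rule the `di`, `ci` and `r` are algebraic. -/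
def AlgebraicSys {Sig : Type} (Rules : Set (CondRule Sig)) : Prop :=
  ∀ ρ ∈ Rules, (∀ p ∈ ρ.conds, Tm.Algebraic p.1 ∧ Tm.Algebraic p.2) ∧ Tm.Algebraic ρ.rhs

/-- A term respects the arity `a` if it contains no subterm `f t1 … tn` with `n > a f`. -/
def RespectsArity {Sig : Type} (a : Sig → ℕ) (t : Tm Sig) : Prop :=
  ∀ (f : Sig) (ts : List (Tm Sig)),
    Tm.Subterm (Tm.appList (Tm.sym f) ts) t → ts.length ≤ a f

/-- A conditional rule respects `a` if the `di`, `ci` and both sides of `l ↦ r`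
respect `a`, and `l = f l1 … lk` with `k = a f`. -/
def RuleRespectsArity {Sig : Type} (a : Sig → ℕ) (ρ : CondRule Sig) : Prop :=
  (∀ p ∈ ρ.conds, RespectsArity a p.1 ∧ RespectsArity a p.2) ∧
  RespectsArity a ρ.lhs ∧ RespectsArity a ρ.rhs ∧
  ∃ (f : Sig) (ls : List (Tm Sig)), ρ.lhs = Tm.appList (Tm.sym f) ls ∧ ls.length = a f

def SysRespectsArity {Sig : Type} (a : Sig → ℕ) (Rules : Set (CondRule Sig)) : Prop :=
  ∀ ρ ∈ Rules, RuleRespectsArity a ρ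

/-- `AN_a` : terms having a β-normal form, whose β-normal form respects `a`. -/
def ANset {Sig : Type} (a : Sig → ℕ) : Set (Tm Sig) :=
  {t | ∃ n, IsBnf t n ∧ RespectsArity a n}

/-- The rewrite relation of the unconditional system `R̄` containing `l ↦ di` and
`l ↦ r` for each rule `d⃗ = c⃗ ⊃ l ↦ r` of `R`. -/
inductive BarRel {Sig : Type} (Rules : Set (CondRule Sig)) : Tm Sig → Tm Sig → Prop
  | ruleCond {ρ : CondRule Sig} (hρ : ρ ∈ Rules) {p : Tm Sig × Tm Sig} (hp : p ∈ ρ.conds)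
      (σ : ℕ → Tm Sig) : BarRel Rules (Tm.subst σ ρ.lhs) (Tm.subst σ p.1)
  | ruleRhs {ρ : CondRule Sig} (hρ : ρ ∈ Rules) (σ : ℕ → Tm Sig) :
      BarRel Rules (Tm.subst σ ρ.lhs) (Tm.subst σ ρ.rhs)
  | abs {t u : Tm Sig} : BarRel Rules t u → BarRel Rules (Tm.lam t) (Tm.lam u)
  | appL {t u v : Tm Sig} : BarRel Rules t u → BarRel Rules (Tm.app t v) (Tm.app u v)
  | appR {t u v : Tm Sig} : BarRel Rules t u → BarRel Rules (Tm.app v t) (Tm.app v u)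
  | substC (σ : ℕ → Tm Sig) {t u : Tm Sig} : BarRel Rules t u →
      BarRel Rules (Tm.subst σ t) (Tm.subst σ u)

/-- Conditionally `(R, a)`-stable sets of terms. -/
def CondStable {Sig : Type} (Rules : Set (CondRule Sig)) (a : Sig → ℕ)
    (S : Set (Tm Sig)) : Prop :=
  (∀ t ∈ S, RespectsArity a t) ∧
  (∀ t ∈ S, ∀ u, (Beta t u ∨ BarRel Rules t u) → u ∈ S) ∧
  (∀ t ∈ S, ∀ u, Tm.Subterm u t → u ∈ S)

/-- Head β-step along an application spine. -/
inductive HeadAux {Sig : Type} : Tm Sig → Tm Sig → Prop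
  | beta (b a₀ : Tm Sig) : HeadAux (Tm.app (Tm.lam b) a₀) (Tm.subst1 a₀ b)
  | app {t u : Tm Sig} (v : Tm Sig) : HeadAux t u → HeadAux (Tm.app t v) (Tm.app u v)

/-- Head β-reduction `→h` : `λx⃗.(λy.b) a₀ a₁ … aₙ →h λx⃗.b[y:=a₀] a₁ … aₙ`. -/
inductive HeadRed {Sig : Type} : Tm Sig → Tm Sig → Prop
  | base {t u : Tm Sig} : HeadAux t u → HeadRed t u
  | lam {t u : Tm Sig} : HeadRed t u → HeadRed (Tm.lam t) (Tm.lam u)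

/-- The relation `≻` : (a) `λx⃗.v a1 … an ≻ ai` for `v` a variable or a symbol and
`n > 0`; (b) `λx⃗.(λy.b) a0 a1 … an ≻ λx⃗.b[y:=a0] a1 … an` (a head β-step). -/
def SuccRel {Sig : Type} (t u : Tm Sig) : Prop :=
  (∃ (m : ℕ) (h : Tm Sig) (args : List (Tm Sig)),
    ((∃ n, h = Tm.var n) ∨ (∃ f, h = Tm.sym f)) ∧ args ≠ [] ∧
    t = Tm.lamN m (Tm.appList h args) ∧ u ∈ args)
  ∨ HeadRed t u

/-- The nested parallelization `▷_{R_i}` of `→_{R_i}`: the smallest parallel rewrite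
relation with `lσ ▷ rτ` whenever `lσ →_{R_i} rσ` and `σ ▷ τ`. -/
inductive NPar {Sig : Type} (Rules : Set (CondRule Sig)) (i : ℕ) : Tm Sig → Tm Sig → Prop
  | var (n : ℕ) : NPar Rules i (Tm.var n) (Tm.var n)
  | sym (f : Sig) : NPar Rules i (Tm.sym f) (Tm.sym f)
  | app {t₁ u₁ t₂ u₂ : Tm Sig} : NPar Rules i t₁ u₁ → NPar Rules i t₂ u₂ →
      NPar Rules i (Tm.app t₁ t₂) (Tm.app u₁ u₂)
  | abs {t u : Tm Sig} : NPar Rules i t u → NPar Rules i (Tm.lam t) (Tm.lam u)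
  | substC (σ : ℕ → Tm Sig) {t u : Tm Sig} : NPar Rules i t u →
      NPar Rules i (Tm.subst σ t) (Tm.subst σ u)
  | rule {ρ : CondRule Sig} (hρ : ρ ∈ Rules) (σ τ : ℕ → Tm Sig)
      (hstep : CondRel Rules i (Tm.subst σ ρ.lhs) (Tm.subst σ ρ.rhs))
      (hστ : ∀ n, NPar Rules i (σ n) (τ n)) :
      NPar Rules i (Tm.subst σ ρ.lhs) (Tm.subst τ ρ.rhs)

/-- The smallest parallel rewrite relation containing `R`. -/
inductive ParCl {Sig : Type} (R : Tm Sig → Tm Sig → Prop) : Tm Sig → Tm Sig → Prop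
  | base {t u : Tm Sig} : R t u → ParCl R t u
  | var (n : ℕ) : ParCl R (Tm.var n) (Tm.var n)
  | sym (f : Sig) : ParCl R (Tm.sym f) (Tm.sym f)
  | app {t₁ u₁ t₂ u₂ : Tm Sig} : ParCl R t₁ u₁ → ParCl R t₂ u₂ →
      ParCl R (Tm.app t₁ t₂) (Tm.app u₁ u₂)
  | abs {t u : Tm Sig} : ParCl R t u → ParCl R (Tm.lam t) (Tm.lam u)
  | substC (σ : ℕ → Tm Sig) {t u : Tm Sig} : ParCl R t u →
      ParCl R (Tm.subst σ t) (Tm.subst σ u)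

/-- A rooted β-conditional rewrite step `lσ →_{R(β)_i} rσ` for the rule `ρ` and the
substitution `σ`: `ρ ∈ R` and the conditions of `ρ` instantiated by `σ` are joinable
w.r.t. `→_{β ∪ R(β)_{i-1}}`. -/
def RootedBStep {Sig : Type} (Rules : Set (CondRule Sig)) :
    ℕ → CondRule Sig → (ℕ → Tm Sig) → Prop
  | 0 => fun _ _ => False
  | i + 1 => fun ρ σ => ρ ∈ Rules ∧
      ∀ p ∈ ρ.conds,
        Joinable (fun a b => Beta a b ∨ BCondRel Rules i a b)
          (Tm.subst σ p.1) (Tm.subst σ p.2)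

/-- Subterm at a position (positions only descend through applications, which is
enough for algebraic left-hand sides). -/
def subtermAt {Sig : Type} : Tm Sig → List Bool → Option (Tm Sig)
  | t, [] => some t
  | Tm.app a _, false :: p => subtermAt a p
  | Tm.app _ b, true :: p => subtermAt b p
  | _, _ :: _ => none

/-- Replacement at a position. -/
def replaceAt {Sig : Type} : Tm Sig → List Bool → Tm Sig → Option (Tm Sig)
  | _, [], s => some s
  | Tm.app a b, false :: p, s => (replaceAt a p s).map (fun a' => Tm.app a' b)
  | Tm.app a b, true :: p, s => (replaceAt b p s).map (fun b' => Tm.app a b')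
  | _, _ :: _, _ => none

/-- Conditional critical pairs: an overlap of `ρ₂` at a non-variable position `p` of
the left-hand side of `ρ₁` via a most general unifier (here presented with a pair of
substitutions, which accounts for variable-disjoint renamings). -/
def CriticalPair {Sig : Type} (Rules : Set (CondRule Sig))
    (conds : List (Tm Sig × Tm Sig)) (s t : Tm Sig) : Prop :=
  ∃ ρ₁ ∈ Rules, ∃ ρ₂ ∈ Rules, ∃ (p : List Bool) (w : Tm Sig) (σ₁ σ₂ : ℕ → Tm Sig),
    subtermAt ρ₁.lhs p = some w ∧
    (∀ n, w ≠ Tm.var n) ∧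
    ¬ (ρ₁ = ρ₂ ∧ p = []) ∧
    Tm.subst σ₁ w = Tm.subst σ₂ ρ₂.lhs ∧
    (∀ τ₁ τ₂ : ℕ → Tm Sig, Tm.subst τ₁ w = Tm.subst τ₂ ρ₂.lhs →
      ∃ δ : ℕ → Tm Sig, (∀ n, Tm.FVar ρ₁.lhs n → τ₁ n = Tm.subst δ (σ₁ n)) ∧
        (∀ n, Tm.FVar ρ₂.lhs n → τ₂ n = Tm.subst δ (σ₂ n))) ∧
    conds = ρ₁.conds.map (fun q => (Tm.subst σ₁ q.1, Tm.subst σ₁ q.2)) ++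
            ρ₂.conds.map (fun q => (Tm.subst σ₂ q.1, Tm.subst σ₂ q.2)) ∧
    replaceAt (Tm.subst σ₁ ρ₁.lhs) p (Tm.subst σ₂ ρ₂.rhs) = some s ∧
    t = Tm.subst σ₁ ρ₁.rhs

/-- A symbol is defined if it heads the left-hand side of some rule. -/
def DefinedSym {Sig : Type} (Rules : Set (CondRule Sig)) (f : Sig) : Prop :=
  ∃ ρ ∈ Rules, ∃ ts : List (Tm Sig), ρ.lhs = Tm.appList (Tm.sym f) ts

/-- OrthonormalSys systems. -/
def OrthonormalSys {Sig : Type} (Rules : Set (CondRule Sig)) : Prop :=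
  LeftLinear Rules ∧
  (∀ ρ ∈ Rules, ∀ p ∈ ρ.conds, Tm.ClosedTm p.2 ∧ BetaNormal p.2 ∧
    ∀ f, DefinedSym Rules f → ¬ Tm.Subterm (Tm.sym f) p.2) ∧
  (∀ (conds : List (Tm Sig × Tm Sig)) (s t : Tm Sig), CriticalPair Rules conds s t →
    ∃ i j : Fin conds.length, i ≠ j ∧
      (conds.get i).1 = (conds.get j).1 ∧ (conds.get i).2 ≠ (conds.get j).2)

/-- Dershowitz–Manna multiset extension of `<` on `ℕ`. -/
def MulLt (s t : Multiset ℕ) : Prop :=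
  ∃ X Y Z : Multiset ℕ, Y ≠ 0 ∧ s = Z + X ∧ t = Z + Y ∧ ∀ x ∈ X, ∃ y ∈ Y, x < y

/-! ### Renamings and substitutions -/

namespace Tm

variable {Sig : Type}

/-- Extension of a renaming under one binder. -/
def upr (ξ : ℕ → ℕ) : ℕ → ℕ
  | 0 => 0
  | n + 1 => ξ n + 1

/-- Renaming of the free de Bruijn indices; `lift d` is the special case of a shift above `d`
(`lift_eq_ren`), which makes the usual composition laws provable by structural induction. -/
def ren (ξ : ℕ → ℕ) : Tm Sig → Tm Sig
  | var n => var (ξ n)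
  | app t u => app (ren ξ t) (ren ξ u)
  | lam t => lam (ren (upr ξ) t)
  | sym f => sym f

theorem lift_eq_ren_aux (t : Tm Sig) :
    ∀ (d : ℕ) (ξ : ℕ → ℕ), (∀ n, ξ n = if n < d then n else n + 1) → lift d t = ren ξ t := by
  induction t with
  | var n =>
    intro d ξ h
    simp only [lift, ren, h]
    split <;> rfl
  | app t u iht ihu =>
    intro d ξ h
    simp only [lift, ren, iht d ξ h, ihu d ξ h]
  | lam t ih =>
    intro d ξ h
    simp only [lift, ren]
    rw [ih (d + 1) (upr ξ)]
    intro n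
    cases n with
    | zero => simp [upr]
    | succ n => simp only [upr, h]; split <;> split <;> omega
  | sym f => intros; rfl

theorem lift_eq_ren (t : Tm Sig) : lift 0 t = ren Nat.succ t :=
  lift_eq_ren_aux t 0 _ (by intro n; simp)

theorem ren_eq_subst (t : Tm Sig) : ∀ ξ : ℕ → ℕ, ren ξ t = subst (fun n => var (ξ n)) t := by
  induction t with
  | var n => intro ξ; rfl
  | app t u iht ihu => intro ξ; simp only [ren, subst, iht, ihu]
  | lam t ih =>
    intro ξ
    simp only [ren, subst, ih]
    congr 2
    funext n
    cases n <;> simp [upr, up, lift]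
  | sym f => intro ξ; rfl

theorem up_var : up (var : ℕ → Tm Sig) = var := by
  funext n
  cases n <;> simp [up, lift]

theorem subst_var (t : Tm Sig) : subst var t = t := by
  induction t with
  | var n => rfl
  | app t u iht ihu => simp only [subst, iht, ihu]
  | lam t ih => simp only [subst, up_var, ih]
  | sym f => rfl

theorem subst_ren (t : Tm Sig) :
    ∀ (σ : ℕ → Tm Sig) (ξ : ℕ → ℕ), subst σ (ren ξ t) = subst (fun n => σ (ξ n)) t := by
  induction t with
  | var n => intros; rfl
  | app t u iht ihu => intro σ ξ; simp only [ren, subst, iht, ihu]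
  | lam t ih =>
    intro σ ξ
    simp only [ren, subst, ih]
    congr 2
    funext n
    cases n <;> rfl
  | sym f => intros; rfl

theorem ren_ren (t : Tm Sig) (ξ ζ : ℕ → ℕ) : ren ζ (ren ξ t) = ren (fun n => ζ (ξ n)) t := by
  rw [ren_eq_subst, subst_ren, ren_eq_subst]

theorem ren_subst (t : Tm Sig) :
    ∀ (ξ : ℕ → ℕ) (σ : ℕ → Tm Sig), ren ξ (subst σ t) = subst (fun n => ren ξ (σ n)) t := by
  induction t with
  | var n => intros; rfl
  | app t u iht ihu => intro ξ σ; simp only [ren, subst, iht, ihu]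
  | lam t ih =>
    intro ξ σ
    simp only [ren, subst, ih]
    congr 2
    funext n
    cases n with
    | zero => rfl
    | succ n => simp only [up, lift_eq_ren, ren_ren]; rfl
  | sym f => intros; rfl

theorem subst_subst (t : Tm Sig) :
    ∀ σ τ : ℕ → Tm Sig, subst τ (subst σ t) = subst (fun n => subst τ (σ n)) t := by
  induction t with
  | var n => intros; rfl
  | app t u iht ihu => intro σ τ; simp only [subst, iht, ihu]
  | lam t ih =>
    intro σ τ
    simp only [subst, ih]
    congr 2
    funext n
    cases n with
    | zero => rfl
    | succ n => simp only [up, lift_eq_ren, subst_ren, ren_subst]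
  | sym f => intros; rfl

theorem subst_subst1 (σ : ℕ → Tm Sig) (t u : Tm Sig) :
    subst σ (subst1 u t) = subst1 (subst σ u) (subst (up σ) t) := by
  simp only [subst1, subst_subst]
  congr 1
  funext n
  cases n with
  | zero => rfl
  | succ n =>
    simp only [up, scons, lift_eq_ren, subst_ren, subst]
    exact (subst_var _).symm

end Tm

/-! ### Parallel β-reduction -/

section Parallel

variable {Sig : Type}

/-- Parallel β-reduction without the closure under substitution among its rules, so that
it can be inverted on the shape of its source; closure under substitution is `ParB.subst`. -/
inductive ParB : Tm Sig → Tm Sig → Prop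
  | var (n : ℕ) : ParB (Tm.var n) (Tm.var n)
  | sym (f : Sig) : ParB (Tm.sym f) (Tm.sym f)
  | app {t₁ u₁ t₂ u₂ : Tm Sig} : ParB t₁ u₁ → ParB t₂ u₂ →
      ParB (Tm.app t₁ t₂) (Tm.app u₁ u₂)
  | abs {t u : Tm Sig} : ParB t u → ParB (Tm.lam t) (Tm.lam u)
  | beta {t₁ u₁ t₂ u₂ : Tm Sig} : ParB t₁ u₁ → ParB t₂ u₂ →
      ParB (Tm.app (Tm.lam t₁) t₂) (Tm.subst1 u₂ u₁)

theorem ParB.rfl' (t : Tm Sig) : ParB t t := by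
  induction t with
  | var n => exact .var n
  | app t u iht ihu => exact .app iht ihu
  | lam t ih => exact .abs ih
  | sym f => exact .sym f

theorem ParB.ren {t u : Tm Sig} (h : ParB t u) :
    ∀ ξ : ℕ → ℕ, ParB (Tm.ren ξ t) (Tm.ren ξ u) := by
  induction h with
  | var n => intro ξ; exact .rfl' _
  | sym f => intro ξ; exact .rfl' _
  | app _ _ ih₁ ih₂ => intro ξ; exact .app (ih₁ ξ) (ih₂ ξ)
  | abs _ ih => intro ξ; exact .abs (ih _)
  | @beta t₁ u₁ t₂ u₂ _ _ ih₁ ih₂ =>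
    intro ξ
    have e : Tm.ren ξ (Tm.subst1 u₂ u₁) = Tm.subst1 (Tm.ren ξ u₂) (Tm.ren (Tm.upr ξ) u₁) := by
      simp only [Tm.subst1, Tm.ren_subst, Tm.subst_ren]
      congr 1
      funext n
      cases n <;> rfl
    rw [e]
    exact .beta (ih₁ _) (ih₂ ξ)

theorem ParB.up {σ τ : ℕ → Tm Sig} (h : ∀ n, ParB (σ n) (τ n)) (n : ℕ) :
    ParB (Tm.up σ n) (Tm.up τ n) := by
  cases n with
  | zero => exact .var 0
  | succ n =>
    simp only [Tm.up, Tm.lift_eq_ren]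
    exact (h n).ren _

theorem ParB.subst {t u : Tm Sig} (h : ParB t u) :
    ∀ {σ τ : ℕ → Tm Sig}, (∀ n, ParB (σ n) (τ n)) → ParB (Tm.subst σ t) (Tm.subst τ u) := by
  induction h with
  | var n => intro σ τ hs; exact hs n
  | sym f => intros; exact .sym f
  | app _ _ ih₁ ih₂ => intro σ τ hs; exact .app (ih₁ hs) (ih₂ hs)
  | abs _ ih => intro σ τ hs; exact .abs (ih (ParB.up hs))
  | beta _ _ ih₁ ih₂ =>
    intro σ τ hs
    rw [Tm.subst_subst1]
    exact .beta (ih₁ (ParB.up hs)) (ih₂ hs)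

theorem ParB.subst1 {t t' u u' : Tm Sig} (ht : ParB t t') (hu : ParB u u') :
    ParB (Tm.subst1 u t) (Tm.subst1 u' t') := by
  apply ht.subst
  intro n
  cases n with
  | zero => exact hu
  | succ n => exact .var n

theorem ParB.diamond {t u : Tm Sig} (h : ParB t u) :
    ∀ v, ParB t v → ∃ w, ParB u w ∧ ParB v w := by
  induction h with
  | var n => intro v hv; exact ⟨v, hv, .rfl' v⟩
  | sym f => intro v hv; exact ⟨v, hv, .rfl' v⟩
  | abs _ ih =>
    intro v hv
    cases hv with
    | abs hv =>
      obtain ⟨w, h₁, h₂⟩ := ih _ hv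
      exact ⟨_, .abs h₁, .abs h₂⟩
  | app h₁ h₂ ih₁ ih₂ =>
    intro v hv
    cases hv with
    | app g₁ g₂ =>
      obtain ⟨w₁, a₁, b₁⟩ := ih₁ _ g₁
      obtain ⟨w₂, a₂, b₂⟩ := ih₂ _ g₂
      exact ⟨_, .app a₁ a₂, .app b₁ b₂⟩
    | beta g₁ g₂ =>
      obtain ⟨w₁, a₁, b₁⟩ := ih₁ _ (.abs g₁)
      obtain ⟨w₂, a₂, b₂⟩ := ih₂ _ g₂
      cases h₁
      cases b₁ with
      | abs b₁ =>
        cases a₁ with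
        | abs a₁ => exact ⟨_, .beta a₁ a₂, .subst1 b₁ b₂⟩
  | beta h₁ h₂ ih₁ ih₂ =>
    intro v hv
    cases hv with
    | app g₁ g₂ =>
      cases g₁ with
      | abs g₁ =>
        obtain ⟨w₁, a₁, b₁⟩ := ih₁ _ g₁
        obtain ⟨w₂, a₂, b₂⟩ := ih₂ _ g₂
        exact ⟨_, .subst1 a₁ a₂, .beta b₁ b₂⟩
    | beta g₁ g₂ =>
      obtain ⟨w₁, a₁, b₁⟩ := ih₁ _ g₁
      obtain ⟨w₂, a₂, b₂⟩ := ih₂ _ g₂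
      exact ⟨_, .subst1 a₁ a₂, .subst1 b₁ b₂⟩

theorem Beta.parB {t u : Tm Sig} (h : Beta t u) : ParB t u := by
  induction h with
  | beta t u => exact .beta (.rfl' t) (.rfl' u)
  | abs _ ih => exact .abs ih
  | appL _ ih => exact .app ih (.rfl' _)
  | appR _ ih => exact .app (.rfl' _) ih
  | substC σ _ ih => exact ih.subst (fun n => .rfl' _)

end Parallel

/-! ### Congruence of many-step rewriting -/

section Congruence

open Relation

variable {Sig : Type} {R : Tm Sig → Tm Sig → Prop}

theorem rtg_mono {α : Type} {P Q : α → α → Prop} (h : ∀ a b, P a b → Q a b) {t u : α}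
    (ht : ReflTransGen P t u) : ReflTransGen Q t u :=
  ht.lift id h

theorem rtg_app (hL : ∀ t u v, R t u → R (Tm.app t v) (Tm.app u v))
    (hR : ∀ t u v, R t u → R (Tm.app v t) (Tm.app v u)) {t t' u u' : Tm Sig}
    (ht : ReflTransGen R t t') (hu : ReflTransGen R u u') :
    ReflTransGen R (Tm.app t u) (Tm.app t' u') :=
  (ht.lift (fun x => Tm.app x u) (fun _ _ h => hL _ _ _ h)).trans
    (hu.lift (fun x => Tm.app t' x) (fun _ _ h => hR _ _ _ h))

theorem ParB.rtg_beta {t u : Tm Sig} (h : ParB t u) : ReflTransGen Beta t u := by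
  have app := @rtg_app Sig Beta (fun _ _ _ h => .appL h) (fun _ _ _ h => .appR h)
  have abs : ∀ {t u : Tm Sig}, ReflTransGen Beta t u →
      ReflTransGen Beta (Tm.lam t) (Tm.lam u) :=
    fun h => h.lift Tm.lam (fun _ _ h => .abs h)
  induction h with
  | var n => exact .refl
  | sym f => exact .refl
  | app _ _ ih₁ ih₂ => exact app ih₁ ih₂
  | abs _ ih => exact abs ih
  | beta _ _ ih₁ ih₂ => exact (app (abs ih₁) ih₂).tail (.beta _ _)

/-- A rewrite relation allows many-step rewriting inside a substitution. -/
theorem rtg_subst (hA : ∀ t u, R t u → R (Tm.lam t) (Tm.lam u))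
    (hL : ∀ t u v, R t u → R (Tm.app t v) (Tm.app u v))
    (hR : ∀ t u v, R t u → R (Tm.app v t) (Tm.app v u))
    (hS : ∀ σ t u, R t u → R (Tm.subst σ t) (Tm.subst σ u)) (t : Tm Sig) :
    ∀ σ τ : ℕ → Tm Sig, (∀ n, ReflTransGen R (σ n) (τ n)) →
      ReflTransGen R (Tm.subst σ t) (Tm.subst τ t) := by
  induction t with
  | var n => intro σ τ h; exact h n
  | app t u iht ihu => intro σ τ h; exact rtg_app hL hR (iht σ τ h) (ihu σ τ h)
  | lam t ih =>
    intro σ τ h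
    refine (ih (Tm.up σ) (Tm.up τ) ?_).lift Tm.lam hA
    intro n
    cases n with
    | zero => exact .refl
    | succ n =>
      simp only [Tm.up, Tm.lift_eq_ren, Tm.ren_eq_subst]
      exact (h n).lift _ (hS _)
  | sym f => intros; exact .refl

end Congruence

/-! ### Algebraic patterns and applicative terms -/

section Patterns

variable {Sig : Type}

mutual
/-- Algebraic terms, in binary-application form. -/
inductive Pat : Tm Sig → Prop
  | var (n : ℕ) : Pat (Tm.var n)
  | head {t : Tm Sig} : HeadPat t → Pat t
/-- Algebraic terms headed by a function symbol, in binary-application form. -/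
inductive HeadPat : Tm Sig → Prop
  | sym (f : Sig) : HeadPat (Tm.sym f)
  | app {t u : Tm Sig} : HeadPat t → Pat u → HeadPat (Tm.app t u)
end

theorem HeadPat.appList (ts : List (Tm Sig)) :
    ∀ h : Tm Sig, HeadPat h → (∀ t ∈ ts, Pat t) → HeadPat (Tm.appList h ts) := by
  induction ts with
  | nil => intro h hh _; exact hh
  | cons u us ih =>
    intro h hh hts
    exact ih _ (.app hh (hts u (by simp))) (fun t ht => hts t (by simp [ht]))

theorem Tm.Algebraic.pat {t : Tm Sig} (h : Tm.Algebraic t) : Pat t := by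
  induction h with
  | var n => exact .var n
  | symApp f ts _ ih => exact .head (HeadPat.appList ts _ (.sym f) ih)

theorem CondRule.headPat (ρ : CondRule Sig) : HeadPat ρ.lhs := by
  have h := ρ.lhs_alg.pat
  generalize he : ρ.lhs = l at h
  cases h with
  | var n => exact absurd he (ρ.lhs_not_var n)
  | head h => exact h

theorem Tm.countVar_pos (t : Tm Sig) : ∀ n, Tm.FVar t n → 1 ≤ Tm.countVar t n := by
  induction t with
  | var m => intro n h; simp_all [Tm.FVar, Tm.countVar]
  | app t u iht ihu =>
    intro n h
    simp only [Tm.countVar]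
    rcases h with h | h
    · have := iht n h; omega
    · have := ihu n h; omega
  | lam t ih => intro n h; exact ih _ h
  | sym f => intro n h; exact h.elim

theorem Tm.LinearTm.left {t u : Tm Sig} (h : Tm.LinearTm (Tm.app t u)) : Tm.LinearTm t := by
  intro n; have := h n; simp only [Tm.countVar] at this; omega

theorem Tm.LinearTm.right {t u : Tm Sig} (h : Tm.LinearTm (Tm.app t u)) : Tm.LinearTm u := by
  intro n; have := h n; simp only [Tm.countVar] at this; omega

theorem Tm.LinearTm.disjoint {t u : Tm Sig} (h : Tm.LinearTm (Tm.app t u)) (n : ℕ)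
    (ht : Tm.FVar t n) : ¬ Tm.FVar u n := by
  intro hu
  have h₀ := h n
  have h₁ := Tm.countVar_pos t n ht
  have h₂ := Tm.countVar_pos u n hu
  simp only [Tm.countVar] at h₀
  omega

theorem Pat.applicative {t : Tm Sig} (h : Pat t) : Tm.Applicative t :=
  Pat.rec (motive_1 := fun t _ => Tm.Applicative t) (motive_2 := fun t _ => Tm.Applicative t)
    (fun n => .var n) (fun _ ih => ih) (fun f => .sym f) (fun _ _ ih₁ ih₂ => .app ih₁ ih₂) h

theorem Tm.Applicative.subst_congr {t : Tm Sig} (h : Tm.Applicative t) {σ τ : ℕ → Tm Sig} :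
    (∀ n, Tm.FVar t n → σ n = τ n) → Tm.subst σ t = Tm.subst τ t := by
  induction h with
  | var n => intro hs; exact hs n rfl
  | sym f => intro _; rfl
  | app _ _ ih₁ ih₂ =>
    intro hs
    simp only [Tm.subst]
    rw [ih₁ (fun n hn => hs n (.inl hn)), ih₂ (fun n hn => hs n (.inr hn))]

theorem Tm.Applicative.subst_closed {t : Tm Sig} (h : Tm.Applicative t) (hc : Tm.ClosedTm t)
    (σ : ℕ → Tm Sig) : Tm.subst σ t = t :=
  (h.subst_congr (fun n hn => (hc n hn).elim)).trans (Tm.subst_var t)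

theorem Tm.Applicative.subst {t : Tm Sig} (h : Tm.Applicative t) {σ : ℕ → Tm Sig} :
    (∀ n, Tm.FVar t n → Tm.Applicative (σ n)) → Tm.Applicative (Tm.subst σ t) := by
  induction h with
  | var n => intro hs; exact hs n rfl
  | sym f => intro _; exact .sym f
  | app _ _ ih₁ ih₂ =>
    intro hs
    exact .app (ih₁ (fun n hn => hs n (.inl hn))) (ih₂ (fun n hn => hs n (.inr hn)))

theorem Tm.Applicative.of_subst {t : Tm Sig} (h : Tm.Applicative t) {σ : ℕ → Tm Sig} :
    Tm.Applicative (Tm.subst σ t) → ∀ n, Tm.FVar t n → Tm.Applicative (σ n) := by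
  induction h with
  | var m => rintro hs n rfl; exact hs
  | sym f => intro _ n hn; exact hn.elim
  | app _ _ ih₁ ih₂ =>
    intro hs n hn
    cases hs with
    | app a b =>
      rcases hn with hn | hn
      · exact ih₁ a n hn
      · exact ih₂ b n hn

/-- Applicative terms contain no β-redex, hence are fixed by parallel reduction. -/
theorem ParB.eq_of_applicative {t : Tm Sig} (h : Tm.Applicative t) :
    ∀ {u : Tm Sig}, ParB t u → u = t := by
  induction h with
  | var n => intro u hu; cases hu; rfl
  | sym f => intro u hu; cases hu; rfl
  | app h₁ _ ih₁ ih₂ =>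
    intro u hu
    cases hu with
    | app g₁ g₂ => rw [ih₁ g₁, ih₂ g₂]
    | beta _ _ => cases h₁

/-- The substitutions reducing the two sides of a linear application have disjoint relevant
domains, so they can be merged. -/
theorem merge_subst {t u : Tm Sig} (hl : Tm.LinearTm (Tm.app t u)) (ht : Tm.Applicative t)
    (hu : Tm.Applicative u) {σ σ₁ σ₂ : ℕ → Tm Sig} (h₁ : ∀ n, ParB (σ n) (σ₁ n))
    (h₂ : ∀ n, ParB (σ n) (σ₂ n)) :
    ∃ σ', (∀ n, ParB (σ n) (σ' n)) ∧
      Tm.app (Tm.subst σ₁ t) (Tm.subst σ₂ u) = Tm.subst σ' (Tm.app t u) := by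
  classical
  refine ⟨fun n => if Tm.FVar t n then σ₁ n else σ₂ n, ?_, ?_⟩
  · intro n
    dsimp only
    split
    · exact h₁ n
    · exact h₂ n
  · simp only [Tm.subst]
    congr 1
    · exact ht.subst_congr (fun n hn => by simp [hn])
    · refine hu.subst_congr (fun n hn => ?_)
      have : ¬ Tm.FVar t n := fun h => hl.disjoint n h hn
      simp [this]

/-- Parallel β-reduction of an instance of a linear algebraic term takes place inside the
substitution: no variable of the pattern is in head position, so no redex overlaps it. -/
theorem Pat.parB_subst {l : Tm Sig} (h : Pat l) (σ : ℕ → Tm Sig) :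
    Tm.LinearTm l → ∀ u, ParB (Tm.subst σ l) u →
      ∃ σ', (∀ n, ParB (σ n) (σ' n)) ∧ u = Tm.subst σ' l := by
  classical
  let M : Tm Sig → Prop := fun l => Tm.LinearTm l → ∀ u, ParB (Tm.subst σ l) u →
      ∃ σ', (∀ n, ParB (σ n) (σ' n)) ∧ u = Tm.subst σ' l
  refine Pat.rec (motive_1 := fun l _ => M l) (motive_2 := fun l _ => M l)
    ?_ (fun _ ih => ih) ?_ ?_ h
  · intro n _ u hu
    refine ⟨fun m => if m = n then u else σ m, ?_, by simp [Tm.subst]⟩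
    intro m
    dsimp only
    split
    · next hm => subst hm; exact hu
    · exact .rfl' _
  · intro f _ u hu
    cases hu
    exact ⟨σ, fun n => .rfl' _, rfl⟩
  · intro t s ht hs iht ihs hl u hu
    simp only [Tm.subst] at hu
    generalize he : Tm.subst σ t = t' at hu
    cases hu with
    | app g₁ g₂ =>
      obtain ⟨σ₁, p₁, rfl⟩ := iht hl.left _ (he ▸ g₁)
      obtain ⟨σ₂, p₂, rfl⟩ := ihs hl.right _ g₂
      exact merge_subst hl (Pat.head ht).applicative hs.applicative p₁ p₂
    | beta _ _ => cases ht <;> simp [Tm.subst] at he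

end Patterns

/-! ### Commutation of β-reduction with conditional rewriting -/

section Commutation

open Relation

variable {Sig : Type}

/-- One stratum of conditional rewriting, without the closure under substitution among its
rules, so that it can be analysed on the shape of its source. -/
inductive CStep (Rules : Set (CondRule Sig)) (prev : Tm Sig → Tm Sig → Prop) :
    Tm Sig → Tm Sig → Prop
  | rule {ρ : CondRule Sig} (hρ : ρ ∈ Rules) (σ : ℕ → Tm Sig)
      (hconds : ∀ p ∈ ρ.conds, Joinable prev (Tm.subst σ p.1) (Tm.subst σ p.2)) :
      CStep Rules prev (Tm.subst σ ρ.lhs) (Tm.subst σ ρ.rhs)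
  | abs {t u : Tm Sig} : CStep Rules prev t u → CStep Rules prev (Tm.lam t) (Tm.lam u)
  | appL {t u v : Tm Sig} : CStep Rules prev t u →
      CStep Rules prev (Tm.app t v) (Tm.app u v)
  | appR {t u v : Tm Sig} : CStep Rules prev t u →
      CStep Rules prev (Tm.app v t) (Tm.app v u)

variable {Rules : Set (CondRule Sig)}

theorem CStep.subst {prev : Tm Sig → Tm Sig → Prop}
    (hp : ∀ σ t u, prev t u → prev (Tm.subst σ t) (Tm.subst σ u)) {t u : Tm Sig}
    (h : CStep Rules prev t u) :
    ∀ τ, CStep Rules prev (Tm.subst τ t) (Tm.subst τ u) := by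
  induction h with
  | rule hρ σ hc =>
    intro τ
    rw [Tm.subst_subst, Tm.subst_subst]
    refine .rule hρ _ (fun p hpm => ?_)
    obtain ⟨w, h₁, h₂⟩ := hc p hpm
    refine ⟨Tm.subst τ w, ?_, ?_⟩
    · rw [← Tm.subst_subst]; exact h₁.lift _ (hp τ)
    · rw [← Tm.subst_subst]; exact h₂.lift _ (hp τ)
  | abs _ ih => intro τ; exact .abs (ih _)
  | appL _ ih => intro τ; exact .appL (ih _)
  | appR _ ih => intro τ; exact .appR (ih _)

theorem CondStep.cStep {prev : Tm Sig → Tm Sig → Prop}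
    (hp : ∀ σ t u, prev t u → prev (Tm.subst σ t) (Tm.subst σ u)) {t u : Tm Sig}
    (h : CondStep Rules prev t u) : CStep Rules prev t u := by
  induction h with
  | rule hρ σ hc => exact .rule hρ σ hc
  | abs _ ih => exact .abs ih
  | appL _ ih => exact .appL ih
  | appR _ ih => exact .appR ih
  | substC σ _ ih => exact ih.subst hp σ

theorem CStep.condStep {prev : Tm Sig → Tm Sig → Prop} {t u : Tm Sig}
    (h : CStep Rules prev t u) : CondStep Rules prev t u := by
  induction h with
  | rule hρ σ hc => exact .rule hρ σ hc
  | abs _ ih => exact .abs ih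
  | appL _ ih => exact .appL ih
  | appR _ ih => exact .appR ih

theorem CondRel.subst (i : ℕ) (σ : ℕ → Tm Sig) (t u : Tm Sig) (h : CondRel Rules i t u) :
    CondRel Rules i (Tm.subst σ t) (Tm.subst σ u) := by
  cases i with
  | zero => exact h
  | succ i => exact CondStep.substC σ h

theorem CStep.applicative (hra : RightApplicative Rules) {prev : Tm Sig → Tm Sig → Prop}
    {t u : Tm Sig} (h : CStep Rules prev t u) : Tm.Applicative t → Tm.Applicative u := by
  induction h with
  | @rule ρ hρ σ _ =>
    intro ha
    exact (hra ρ hρ).subst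
      (fun n hn => (Pat.head ρ.headPat).applicative.of_subst ha n (ρ.fv_rhs n hn))
  | abs _ _ => intro ha; cases ha
  | appL _ ih => intro ha; cases ha with | app a b => exact .app (ih a) b
  | appR _ ih => intro ha; cases ha with | app a b => exact .app a (ih b)

theorem CondRel.applicative (hra : RightApplicative Rules) (i : ℕ) {t u : Tm Sig}
    (h : CondRel Rules i t u) (ht : Tm.Applicative t) : Tm.Applicative u := by
  cases i with
  | zero => exact h.elim
  | succ i => exact (CondStep.cStep (CondRel.subst i) h).applicative hra ht

/-- Propagation of the one-step commutation tile along a rewrite sequence. -/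
theorem tile_rtg {α : Type} {P R : α → α → Prop}
    (h : ∀ t u v, P t u → R t v → ∃ w, ReflTransGen R u w ∧ P v w) {t v : α}
    (hr : ReflTransGen R t v) : ∀ u, P t u → ∃ w, ReflTransGen R u w ∧ P v w := by
  induction hr with
  | refl => intro u hu; exact ⟨u, .refl, hu⟩
  | tail _ hs ih =>
    intro u hu
    obtain ⟨w, h₁, h₂⟩ := ih u hu
    obtain ⟨w', h₃, h₄⟩ := h _ _ _ h₂ hs
    exact ⟨w', h₁.trans h₃, h₄⟩

/-- The conditions of a semi-closed rule survive parallel reduction of the substitution: the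
common reduct of `dσ` and the closed applicative term `c` is applicative, hence β-normal, so
commutation at the previous stratum brings the reduct of `dσ` to the very same term. -/
theorem joinable_of_parB (hra : RightApplicative Rules) (i : ℕ)
    (ih : ∀ t u v, ParB t u → CondRel Rules i t v →
      ∃ w, ReflTransGen (CondRel Rules i) u w ∧ ParB v w)
    {d c : Tm Sig} (hc : Tm.Applicative c ∧ Tm.ClosedTm c) {σ σ' : ℕ → Tm Sig}
    (hσ : ∀ n, ParB (σ n) (σ' n))
    (hj : Joinable (CondRel Rules i) (Tm.subst σ d) (Tm.subst σ c)) :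
    Joinable (CondRel Rules i) (Tm.subst σ' d) (Tm.subst σ' c) := by
  obtain ⟨w, h₁, h₂⟩ := hj
  rw [hc.1.subst_closed hc.2] at h₂
  have hw : Tm.Applicative w := by
    clear h₁
    induction h₂ with
    | refl => exact hc.1
    | tail _ hs ih => exact CondRel.applicative hra i hs ih
  obtain ⟨w', h₃, h₄⟩ := tile_rtg ih h₁ _ ((ParB.rfl' d).subst hσ)
  rw [ParB.eq_of_applicative hw h₄] at h₃
  refine ⟨w, h₃, ?_⟩
  rw [hc.1.subst_closed hc.2]
  exact h₂

/-- The commutation tile at a given stratum: a step of `→_{R_i}` against a parallel β-step is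
closed by finitely many steps of `→_{R_i}` (a β-step may copy a redex) and one parallel
β-step. -/
theorem parB_condRel_tile (hsc : SemiClosed Rules) (hll : LeftLinear Rules)
    (hra : RightApplicative Rules) (i : ℕ) :
    ∀ t u v, ParB t u → CondRel Rules i t v →
      ∃ w, ReflTransGen (CondRel Rules i) u w ∧ ParB v w := by
  induction i with
  | zero => intro t u v _ h; exact h.elim
  | succ i ih =>
    have hA : ∀ t u : Tm Sig, CondRel Rules (i + 1) t u →
        CondRel Rules (i + 1) (Tm.lam t) (Tm.lam u) := fun _ _ h => CondStep.abs h
    have hL : ∀ t u v : Tm Sig, CondRel Rules (i + 1) t u →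
        CondRel Rules (i + 1) (Tm.app t v) (Tm.app u v) := fun _ _ _ h => CondStep.appL h
    have hR : ∀ t u v : Tm Sig, CondRel Rules (i + 1) t u →
        CondRel Rules (i + 1) (Tm.app v t) (Tm.app v u) := fun _ _ _ h => CondStep.appR h
    have hS := CondRel.subst (Rules := Rules) (i + 1)
    intro t u v hp hr
    have hr' := CondStep.cStep (CondRel.subst i) hr
    clear hr
    induction hr' generalizing u with
    | @rule ρ hρ σ hc =>
      obtain ⟨σ', hσ, rfl⟩ := (Pat.head ρ.headPat).parB_subst σ (hll ρ hρ) u hp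
      refine ⟨Tm.subst σ' ρ.rhs, .single (CondStep.rule hρ σ' (fun p hpm => ?_)),
        (ParB.rfl' _).subst hσ⟩
      exact joinable_of_parB hra i ih (hsc ρ hρ p hpm) hσ (hc p hpm)
    | abs _ ihr =>
      cases hp with
      | abs hp =>
        obtain ⟨w, h₁, h₂⟩ := ihr _ hp
        exact ⟨_, h₁.lift Tm.lam hA, .abs h₂⟩
    | appL hs ihr =>
      cases hp with
      | app g₁ g₂ =>
        obtain ⟨w, h₁, h₂⟩ := ihr _ g₁
        exact ⟨_, rtg_app hL hR h₁ .refl, .app h₂ g₂⟩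
      | @beta s₁ u₁ _ u₂ g₁ g₂ =>
        obtain ⟨w, h₁, h₂⟩ := ihr _ (.abs g₁)
        -- The step from an abstraction is inside its body, as left-hand sides are not
        -- abstractions; so is the rewriting of its reduct.
        have key : ∀ {a b : Tm Sig}, ReflTransGen (CondRel Rules (i + 1)) (Tm.lam a) b →
            ∃ b', b = Tm.lam b' ∧ ReflTransGen (CondRel Rules (i + 1)) a b' := by
          intro a b h
          induction h with
          | refl => exact ⟨a, rfl, .refl⟩
          | tail _ hs ihs =>
            obtain ⟨b', rfl, hb⟩ := ihs
            have hs' := CondStep.cStep (CondRel.subst i) hs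
            generalize he : Tm.lam b' = x at hs'
            cases hs' with
            | @rule ρ _ σ _ =>
              have hpat := ρ.headPat
              generalize ρ.lhs = l at hpat he
              cases hpat <;> simp [Tm.subst] at he
            | abs hs' => cases he; exact ⟨_, rfl, hb.tail hs'.condStep⟩
            | appL _ => cases he
            | appR _ => cases he
        obtain ⟨v', rfl, _⟩ := key (.single (hs.condStep))
        obtain ⟨w', rfl, hw⟩ := key h₁
        cases h₂ with
        | abs h₂ =>
          exact ⟨Tm.subst1 u₂ w', hw.lift (Tm.subst1 u₂) (hS _), .beta h₂ g₂⟩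
    | appR hs ihr =>
      cases hp with
      | app g₁ g₂ =>
        obtain ⟨w, h₁, h₂⟩ := ihr _ g₂
        exact ⟨_, rtg_app hL hR .refl h₁, .app g₁ h₂⟩
      | @beta s₁ u₁ _ u₂ g₁ g₂ =>
        obtain ⟨w, h₁, h₂⟩ := ihr _ g₂
        refine ⟨Tm.subst1 w u₁, rtg_subst hA hL hR hS u₁ _ _ ?_, .beta g₁ h₂⟩
        intro n
        cases n with
        | zero => exact h₁
        | succ n => exact .refl

theorem rtg_parB_iff {t u : Tm Sig} : ReflTransGen ParB t u ↔ ReflTransGen Beta t u := by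
  constructor
  · intro h
    induction h with
    | refl => exact .refl
    | tail _ hs ih => exact ih.trans hs.rtg_beta
  · exact fun h => rtg_mono (fun _ _ h => h.parB) h

theorem commutes_beta_condRew (hsc : SemiClosed Rules) (hll : LeftLinear Rules)
    (hra : RightApplicative Rules) : Commutes Beta (CondRew Rules) := by
  have tile : ∀ t u v, ParB t u → CondRew Rules t v →
      ∃ w, ReflTransGen (CondRew Rules) u w ∧ ParB v w := by
    rintro t u v hp ⟨i, hr⟩
    obtain ⟨w, h₁, h₂⟩ := parB_condRel_tile hsc hll hra i t u v hp hr
    exact ⟨w, rtg_mono (fun _ _ h => ⟨i, h⟩) h₁, h₂⟩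
  intro s u t hb hr
  rw [← rtg_parB_iff] at hb
  induction hb with
  | refl => exact ⟨t, hr, .refl⟩
  | tail _ hs ih =>
    obtain ⟨w, h₁, h₂⟩ := ih
    obtain ⟨w', h₃, h₄⟩ := tile_rtg tile h₁ _ hs
    exact ⟨w', h₃, h₂.trans h₄.rtg_beta⟩

theorem isConfluent_beta : IsConfluent (Beta (Sig := Sig)) := by
  intro t u v hu hv
  rw [← rtg_parB_iff] at hu hv
  obtain ⟨w, h₁, h₂⟩ := church_rosser
    (fun a b c hb hc => by
      obtain ⟨d, h₁, h₂⟩ := ParB.diamond hb c hc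
      exact ⟨d, .single h₁, .single h₂⟩) hu hv
  exact ⟨w, rtg_parB_iff.1 h₁, rtg_parB_iff.1 h₂⟩

/-- The Hindley–Rosen lemma: the union of two commuting confluent relations is confluent. -/
theorem hindley_rosen {α : Type} {R S : α → α → Prop} (hR : IsConfluent R)
    (hS : IsConfluent S) (hc : Commutes R S) : IsConfluent (fun t u => R t u ∨ S t u) := by
  -- The relation `R* ∪ S*` has the diamond property and the same closure as `R ∪ S`.
  let T : α → α → Prop := fun t u => ReflTransGen R t u ∨ ReflTransGen S t u
  have hT : ∀ t u, ReflTransGen T t u → ReflTransGen (fun t u => R t u ∨ S t u) t u := by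
    intro t u h
    induction h with
    | refl => exact .refl
    | tail _ hs ih =>
      rcases hs with hs | hs
      · exact ih.trans (rtg_mono (fun _ _ h => .inl h) hs)
      · exact ih.trans (rtg_mono (fun _ _ h => .inr h) hs)
  have hU : ∀ t u, ReflTransGen (fun t u => R t u ∨ S t u) t u → ReflTransGen T t u :=
    fun _ _ h => rtg_mono
      (fun _ _ h => h.elim (fun h => .inl (.single h)) (fun h => .inr (.single h))) h
  intro t u v hu hv
  obtain ⟨w, h₁, h₂⟩ := church_rosser (r := T)
    (fun a b c hb hcc => by
      have : ∃ d, T b d ∧ T c d := by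
        rcases hb with hb | hb <;> rcases hcc with hcc | hcc
        · obtain ⟨d, h₁, h₂⟩ := hR a b c hb hcc
          exact ⟨d, .inl h₁, .inl h₂⟩
        · obtain ⟨d, h₁, h₂⟩ := hc a b c hb hcc
          exact ⟨d, .inr h₁, .inl h₂⟩
        · obtain ⟨d, h₁, h₂⟩ := hc a c b hcc hb
          exact ⟨d, .inl h₂, .inr h₁⟩
        · obtain ⟨d, h₁, h₂⟩ := hS a b c hb hcc
          exact ⟨d, .inr h₁, .inr h₂⟩
      obtain ⟨d, h₁, h₂⟩ := this
      exact ⟨d, .single h₁, .single h₂⟩) (hU _ _ hu) (hU _ _ hv)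
  exact ⟨w, hT _ _ h₁, hT _ _ h₂⟩

end Commutation

/-- If `R` is semi-closed, left-linear and right-applicative, and `→_R`
is confluent, then `→_{β∪R}` is confluent. -/
theorem confluence_beta_union_cond {Sig : Type} (Rules : Set (CondRule Sig))
    (hsc : SemiClosed Rules) (hll : LeftLinear Rules) (hra : RightApplicative Rules)
    (hconf : IsConfluent (CondRew Rules)) :
    IsConfluent (fun t u : Tm Sig => Beta t u ∨ CondRew Rules t u) := by
  exact hindley_rosen isConfluent_beta hconf (commutes_beta_condRew hsc hll hra)
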